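/- Backward-induction lemma (combinatorial core of Proposition 2): let d : ℕ, and for every list h of naturals with |h| < d let k(h) be a positive natural and δ(h) a nonnegative real, and assume that along every full history (r_1,…,r_d) with r_{i+1} ∈ Fin (k (r_1,…,r_i)) the sum δ(∅) + δ(r_1) + … + δ(r_1,…,r_{d-1}) is at most ε. Let S be a predicate on histories satisfying the closure property: for every history h with |h| < d, if the number of r ∈ Fin (k h) with S(h ++ [r]) is greater than δ(h)·k(h), then S(h). If each r_{i+1} is chosen uniformly at random from Fin (k (r_1,…,r_i)), independently given the past, and the probability that the full history satisfies S is greater than ε, then S holds of the empty history. -/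

import Mathlib

/-!
Write `A h` for the sum of the thresholds `δ` over the proper prefixes of `h`. Backward induction
on the number of remaining steps shows that for every valid `h` the success probability from `h`
is at most `1_S(h) + (ε - A h)` (`successProb_le`). If `S h` holds, this follows from
`successProb ≤ 1` and `A h ≤ ε` (`sum_take_le`, which extends `h` to a full valid history and
uses `0 ≤ δ`). If `S h` fails, the closure property says that at most a `δ h` fraction of the
children satisfy `S`, so averaging the bounds for the children gives
`δ h + (ε - A h - δ h) = ε - A h`. At the empty history `A` vanishes, so a success probability
above `ε` forces `S []`.
-/

/-- A full history of the random process is valid if each entry was chosen among the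
`k`-many options available given the preceding entries. -/
def ValidHistory (k : List ℕ → ℕ) (h : List ℕ) : Prop :=
  ∀ i < h.length, h.getD i 0 < k (h.take i)

open scoped Classical in
/-- `successProb k S d h`: the probability that, continuing from history `h` for `d`
more uniformly random steps (the next entry being uniform on `Fin (k h')` at each
intermediate history `h'`), the resulting full history satisfies `S`. -/
noncomputable def successProb (k : List ℕ → ℕ) (S : List ℕ → Prop) :
    ℕ → List ℕ → ℝ
  | 0, h => if S h then 1 else 0
  | d + 1, h => (∑ r : Fin (k h), successProb k S d (h ++ [(r : ℕ)])) / (k h)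

theorem successProb_le_one (k : List ℕ → ℕ) (S : List ℕ → Prop) (n : ℕ) (h : List ℕ) :
    successProb k S n h ≤ 1 := by
  induction n generalizing h with
  | zero => unfold successProb; split_ifs <;> norm_num
  | succ n ih =>
    unfold successProb
    refine div_le_one_of_le₀ ?_ (Nat.cast_nonneg _)
    calc _ ≤ ∑ _r : Fin (k h), (1 : ℝ) := Finset.sum_le_sum fun r _ => ih _
      _ = k h := by simp

theorem ValidHistory.append {k : List ℕ → ℕ} {h : List ℕ} (hv : ValidHistory k h) {r : ℕ}
    (hr : r < k h) : ValidHistory k (h ++ [r]) := by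
  intro i hi
  rcases Nat.lt_or_ge i h.length with hlt | hge
  · have := hv i hlt
    rwa [List.getD_append _ _ _ _ hlt, List.take_append_of_le_length hlt.le]
  · have : i = h.length := by simp at hi; omega
    subst this
    simpa using hr

theorem sum_take_append (δ : List ℕ → ℝ) (h : List ℕ) (r : ℕ) :
    ∑ i ∈ Finset.range (h ++ [r]).length, δ ((h ++ [r]).take i)
      = ∑ i ∈ Finset.range h.length, δ (h.take i) + δ h := by
  rw [List.length_append, List.length_singleton, Finset.sum_range_succ]
  congr 1
  · refine Finset.sum_congr rfl fun i hi => ?_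
    rw [List.take_append_of_le_length (Finset.mem_range.mp hi).le]
  · simp

/-- The bound on the thresholds along full histories passes to partial ones, since each valid
partial history extends to a full one (all `k` are positive) and the thresholds are nonnegative. -/
theorem sum_take_le {d : ℕ} {k : List ℕ → ℕ} {δ : List ℕ → ℝ} {ε : ℝ}
    (hk : ∀ h : List ℕ, h.length < d → 0 < k h)
    (hδ : ∀ h : List ℕ, h.length < d → 0 ≤ δ h)
    (hsum : ∀ h : List ℕ, h.length = d → ValidHistory k h →
      ∑ i ∈ Finset.range d, δ (h.take i) ≤ ε)
    (n : ℕ) (h : List ℕ) (hn : h.length + n = d) (hv : ValidHistory k h) :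
    ∑ i ∈ Finset.range h.length, δ (h.take i) ≤ ε := by
  induction n generalizing h with
  | zero =>
    have hd : h.length = d := by omega
    rw [hd]
    exact hsum h hd hv
  | succ n ih =>
    have hd : h.length < d := by omega
    have := ih (h ++ [0]) (by simp; omega) (hv.append (hk h hd))
    rw [sum_take_append] at this
    linarith [hδ h hd]

open scoped Classical in
/-- The backward induction: from a valid history `h`, the success probability is at most the
capital left after the thresholds along `h` have been paid, plus one if `S h` holds already. -/
theorem successProb_le {d : ℕ} {k : List ℕ → ℕ} {δ : List ℕ → ℝ} {ε : ℝ} {S : List ℕ → Prop}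
    (hk : ∀ h : List ℕ, h.length < d → 0 < k h)
    (hδ : ∀ h : List ℕ, h.length < d → 0 ≤ δ h)
    (hsum : ∀ h : List ℕ, h.length = d → ValidHistory k h →
      ∑ i ∈ Finset.range d, δ (h.take i) ≤ ε)
    (hclosure : ∀ h : List ℕ, h.length < d →
      δ h * k h < ({r : Fin (k h) | S (h ++ [(r : ℕ)])}.ncard : ℝ) → S h)
    (n : ℕ) (h : List ℕ) (hn : h.length + n = d) (hv : ValidHistory k h) :
    successProb k S n h
      ≤ (if S h then 1 else 0) + (ε - ∑ i ∈ Finset.range h.length, δ (h.take i)) := by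
  induction n generalizing h with
  | zero =>
    have := sum_take_le hk hδ hsum 0 h hn hv
    simp only [successProb]
    linarith
  | succ n ih =>
    by_cases hS : S h
    · have h1 := sum_take_le hk hδ hsum (n + 1) h hn hv
      have h2 := successProb_le_one k S (n + 1) h
      rw [if_pos hS]
      linarith
    · have hd : h.length < d := by omega
      have hkpos : (0 : ℝ) < k h := by exact_mod_cast hk h hd
      have hc := not_lt.mp (mt (hclosure h hd) hS)
      rw [if_neg hS, zero_add, successProb, div_le_iff₀ hkpos]
      set A := ∑ i ∈ Finset.range h.length, δ (h.take i)
      have hcard : ∑ r : Fin (k h), (if S (h ++ [(r : ℕ)]) then (1 : ℝ) else 0)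
          = ({r : Fin (k h) | S (h ++ [(r : ℕ)])}.ncard : ℝ) := by
        rw [Finset.sum_boole, Set.ncard_eq_toFinset_card']
        simp
      calc ∑ r : Fin (k h), successProb k S n (h ++ [(r : ℕ)])
          ≤ ∑ r : Fin (k h), ((if S (h ++ [(r : ℕ)]) then (1 : ℝ) else 0) + (ε - (A + δ h))) := by
            refine Finset.sum_le_sum fun r _ => ?_
            have := ih (h ++ [(r : ℕ)]) (by simp; omega) (hv.append r.isLt)
            rwa [sum_take_append] at this
        _ = ({r : Fin (k h) | S (h ++ [(r : ℕ)])}.ncard : ℝ) + k h * (ε - (A + δ h)) := by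
            rw [Finset.sum_add_distrib, hcard]
            rw [Finset.sum_const, Finset.card_univ, Fintype.card_fin, nsmul_eq_mul]
        _ ≤ (ε - A) * k h := by linarith

/-- backward-induction lemma: suppose along every valid full history the
thresholds `δ` sum to at most `ε`, and `S` has the closure property: whenever more than
a `δ h` fraction of the options `r` at a history `h` lead to a history satisfying `S`,
then `S h` holds. If the probability that a random full history satisfies `S` exceeds
`ε`, then `S` holds at the empty history. -/
theorem backward_induction_conservation (d : ℕ) (k : List ℕ → ℕ) (δ : List ℕ → ℝ) (ε : ℝ)
    (S : List ℕ → Prop)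
    (hk : ∀ h : List ℕ, h.length < d → 0 < k h)
    (hδ : ∀ h : List ℕ, h.length < d → 0 ≤ δ h)
    (hsum : ∀ h : List ℕ, h.length = d → ValidHistory k h →
      ∑ i ∈ Finset.range d, δ (h.take i) ≤ ε)
    (hclosure : ∀ h : List ℕ, h.length < d →
      δ h * k h < ({r : Fin (k h) | S (h ++ [(r : ℕ)])}.ncard : ℝ) → S h)
    (hprob : ε < successProb k S d []) :
    S [] := by
  by_contra hS
  have := successProb_le hk hδ hsum hclosure d [] (by simp) (by intro i hi; simp at hi)
  rw [if_neg hS] at this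
  simp at this
  linarith
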